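/- arXiv:1801.09871 — 3 statements merged into one kernel-verified Lean document; each statement's English description precedes it below -/
import Mathlib

section
/- For any two (not necessarily distinct) vertices z and w of G_0 there exists a vertex y of G_0 with degree exactly 2 such that d(z,y) + d(y,w) ≤ 6. -/
/-- `W` is an `i`-packing in `G`: any two distinct vertices of `W` are at
graph distance greater than `i` in `G`. -/
def IsPacking {V : Type*} (G : SimpleGraph V) (i : ℕ) (W : Set V) : Prop :=
  ∀ u ∈ W, ∀ v ∈ W, u ≠ v → i < G.dist u v

/-- `c` is a `k`-packing coloring of `G`: every color lies in `{1, …, k}` and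
for each `i ∈ {1, …, k}` the color class `c⁻¹(i)` is an `i`-packing. -/
def IsPackingColoring {V : Type*} (G : SimpleGraph V) (k : ℕ) (c : V → ℕ) : Prop :=
  (∀ v, 1 ≤ c v ∧ c v ≤ k) ∧ ∀ i, 1 ≤ i → i ≤ k → IsPacking G i {v | c v = i}

/-- The packing chromatic number: the least `k` admitting a `k`-packing coloring. -/
noncomputable def packingChromaticNumber {V : Type*} (G : SimpleGraph V) : ℕ :=
  sInf {k | ∃ c : V → ℕ, IsPackingColoring G k c}


/-- Edges of `H`; vertices `y1,…,y7` are `0,…,6`, `z1,…,z7` are `7,…,13`,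
and `w` is `14`. -/
def Hedges : List (Fin 15 × Fin 15) :=
  [(0,1),(1,2),(2,6),(6,5),(5,4),(4,0),(1,3),(3,5),
   (7,8),(8,9),(9,13),(13,12),(12,11),(11,7),(8,10),(10,12),
   (3,14),(14,10),(2,7),(4,13)]

/-- The graph `H`. -/
def Hgraph : SimpleGraph (Fin 15) :=
  SimpleGraph.fromRel (fun u v => (u, v) ∈ Hedges)

/-- Glue two disjoint copies of `G` together with five new vertices
`Sum.inr (Sum.inr i)` for `i : Fin 5`: the `i`-th new vertex is adjacent
exactly to `p i` in the first copy and to `q i` in the second copy. -/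
def glue {V : Type*} (G : SimpleGraph V) (p q : Fin 5 → V) :
    SimpleGraph (V ⊕ V ⊕ Fin 5) :=
  SimpleGraph.fromRel (fun u v =>
    match u, v with
    | Sum.inl a, Sum.inl b => G.Adj a b
    | Sum.inr (Sum.inl a), Sum.inr (Sum.inl b) => G.Adj a b
    | Sum.inr (Sum.inr i), Sum.inl a => a = p i
    | Sum.inr (Sum.inr i), Sum.inr (Sum.inl b) => b = q i
    | _, _ => False)

/-- Attachment points of `a,b,c,d,x` in the first copy (`H'`):
`a ↦ y5`, `b ↦ z7`, `c ↦ y3`, `d ↦ z1`, `x ↦ w`. -/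
def pH : Fin 5 → Fin 15 := ![4, 13, 2, 7, 14]

/-- Attachment points of `a,b,c,d,x` in the second copy (`H''`):
`a ↦ y1`, `b ↦ z3`, `c ↦ z5`, `d ↦ y7`, `x ↦ w`. -/
def qH : Fin 5 → Fin 15 := ![0, 9, 11, 6, 14]

/-- The graph `G₀`: two disjoint copies of `H` plus the five vertices
`a,b,c,d,x`, which are `Sum.inr (Sum.inr 0), …, Sum.inr (Sum.inr 4)`. -/
def G₀ : SimpleGraph (Fin 15 ⊕ Fin 15 ⊕ Fin 5) := glue Hgraph pH qH


/-- Distances from the five new vertices to the first copy of `H`. -/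
def tabA : Fin 5 → Fin 15 → ℕ :=
  ![![2, 3, 4, 3, 1, 2, 3, 5, 4, 3, 4, 4, 3, 2, 4],
    ![3, 4, 5, 4, 2, 3, 4, 4, 3, 2, 3, 3, 2, 1, 4],
    ![3, 2, 1, 3, 4, 3, 2, 2, 3, 4, 4, 3, 4, 5, 4],
    ![4, 3, 2, 4, 5, 4, 3, 1, 2, 3, 3, 2, 3, 4, 4],
    ![4, 3, 4, 2, 4, 3, 4, 4, 3, 4, 2, 4, 3, 4, 1]]

/-- Distances from the five new vertices to the second copy of `H`. -/
def tabB : Fin 5 → Fin 15 → ℕ :=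
  ![![1, 2, 3, 3, 2, 3, 4, 4, 5, 4, 5, 5, 4, 3, 4],
    ![4, 5, 4, 5, 3, 4, 5, 3, 2, 1, 3, 4, 3, 2, 4],
    ![5, 4, 3, 5, 4, 5, 4, 2, 3, 4, 3, 1, 2, 3, 4],
    ![4, 3, 2, 3, 3, 2, 1, 3, 4, 5, 5, 4, 5, 4, 4],
    ![4, 3, 4, 2, 4, 3, 4, 4, 3, 4, 2, 4, 3, 4, 1]]

/-- Distances between the five new vertices. -/
def tabC : Fin 5 → Fin 5 → ℕ :=
  ![![0, 3, 5, 5, 5],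
    ![3, 0, 5, 5, 5],
    ![5, 5, 0, 3, 5],
    ![5, 5, 3, 0, 5],
    ![5, 5, 5, 5, 0]]

/-- The full distance table. -/
def tab (i : Fin 5) : Fin 15 ⊕ Fin 15 ⊕ Fin 5 → ℕ
  | Sum.inl a => tabA i a
  | Sum.inr (Sum.inl a) => tabB i a
  | Sum.inr (Sum.inr a) => tabC i a

/-- Decidable adjacency in `H`. -/
def adjH (a b : Fin 15) : Bool := Hedges.contains (a, b) || Hedges.contains (b, a)

/-- Decidable adjacency in `G₀`. -/
def adjG : Fin 15 ⊕ Fin 15 ⊕ Fin 5 → Fin 15 ⊕ Fin 15 ⊕ Fin 5 → Bool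
  | Sum.inl a, Sum.inl b => adjH a b
  | Sum.inr (Sum.inl a), Sum.inr (Sum.inl b) => adjH a b
  | Sum.inr (Sum.inr i), Sum.inl a => a == pH i
  | Sum.inr (Sum.inr i), Sum.inr (Sum.inl b) => b == qH i
  | Sum.inl a, Sum.inr (Sum.inr i) => a == pH i
  | Sum.inr (Sum.inl b), Sum.inr (Sum.inr i) => b == qH i
  | Sum.inr (Sum.inr _), Sum.inr (Sum.inr _) => false
  | Sum.inl _, Sum.inr (Sum.inl _) => false
  | Sum.inr (Sum.inl _), Sum.inl _ => false

theorem adjH_irrefl : ∀ a, adjH a a = false := by decide +kernel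

theorem adjH_iff (a b : Fin 15) : Hgraph.Adj a b ↔ adjH a b = true := by
  have h := adjH_irrefl
  simp only [Hgraph, SimpleGraph.fromRel_adj, adjH, Bool.or_eq_true, List.contains_iff_mem]
  constructor
  · exact fun h => h.2
  · intro hab
    refine ⟨?_, hab⟩
    rintro rfl
    have := h a
    simp only [adjH, Bool.or_self] at this
    have h2 : Hedges.contains (a, a) = true := by simpa using hab
    simp_all

theorem adjG_iff (u v : Fin 15 ⊕ Fin 15 ⊕ Fin 5) : G₀.Adj u v ↔ adjG u v = true := by
  have hne : ∀ a b, Hgraph.Adj a b → a ≠ b := fun a b h => h.ne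
  have hs : ∀ a b, Hgraph.Adj a b ↔ Hgraph.Adj b a := fun a b => Hgraph.adj_comm a b
  rcases u with a | a | i <;> rcases v with b | b | j <;>
    simp only [G₀, glue, SimpleGraph.fromRel_adj, adjG, ← adjH_iff] <;>
    first
    | (have := hne a b; have := hs a b; simp; tauto)
    | simp

theorem tab_step : ∀ (i : Fin 5) (v : Fin 15 ⊕ Fin 15 ⊕ Fin 5),
    (tab i v = 0 ∧ v = Sum.inr (Sum.inr i)) ∨ ∃ u, adjG v u = true ∧ tab i u + 1 = tab i v := by
  decide +kernel

theorem walk_tab (i : Fin 5) : ∀ (n : ℕ) (v : Fin 15 ⊕ Fin 15 ⊕ Fin 5), tab i v = n →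
    ∃ p : G₀.Walk v (Sum.inr (Sum.inr i)), p.length = n := by
  intro n
  induction n with
  | zero =>
    intro v hv
    rcases tab_step i v with ⟨_, rfl⟩ | ⟨u, _, hu⟩
    · exact ⟨.nil, rfl⟩
    · omega
  | succ n ih =>
    intro v hv
    rcases tab_step i v with ⟨h, _⟩ | ⟨u, ha, hu⟩
    · omega
    · obtain ⟨p, hp⟩ := ih u (by omega)
      exact ⟨.cons ((adjG_iff v u).2 ha) p, by simp [hp]⟩

theorem dist_tab (i : Fin 5) (v : Fin 15 ⊕ Fin 15 ⊕ Fin 5) :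
    G₀.dist v (Sum.inr (Sum.inr i)) ≤ tab i v := by
  obtain ⟨p, hp⟩ := walk_tab i _ v rfl
  exact hp ▸ SimpleGraph.dist_le p

theorem deg_new (i : Fin 5) :
    (G₀.neighborSet (Sum.inr (Sum.inr i))).ncard = 2 := by
  rw [Set.ncard_eq_two]
  refine ⟨Sum.inl (pH i), Sum.inr (Sum.inl (qH i)), by simp, ?_⟩
  ext v
  rw [SimpleGraph.mem_neighborSet, adjG_iff]
  rcases v with a | a | j <;> simp [adjG]

theorem tab_cover : ∀ z w : Fin 15 ⊕ Fin 15 ⊕ Fin 5, ∃ i, tab i z + tab i w ≤ 6 := by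
  decide +kernel

/-- For any two (not necessarily distinct) vertices `z, w` of `G₀` there is a
vertex `y` of degree exactly `2` with `d(z,y) + d(y,w) ≤ 6`. -/
theorem stmt9 (z w : Fin 15 ⊕ Fin 15 ⊕ Fin 5) :
    ∃ y, (G₀.neighborSet y).ncard = 2 ∧ G₀.dist z y + G₀.dist y w ≤ 6 := by
  obtain ⟨i, hi⟩ := tab_cover z w
  refine ⟨Sum.inr (Sum.inr i), deg_new i, ?_⟩
  have h1 := dist_tab i z
  have h2 := dist_tab i w
  rw [SimpleGraph.dist_comm] at h2
  omega
end

section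
/- The graph G_1 is connected and has diameter at most 8: any two vertices of G_1 are at distance at most 8. -/
/-- The vertex type of `G_k`. -/
def Vt : ℕ → Type
  | 0 => Fin 15 ⊕ Fin 15 ⊕ Fin 5
  | k + 1 => Vt k ⊕ Vt k ⊕ Fin 5

/-- The five distinguished vertices `a,b,c,d,x` of `G_k`. -/
def distV : (k : ℕ) → Fin 5 → Vt k
  | 0, i => Sum.inr (Sum.inr i)
  | _ + 1, i => Sum.inr (Sum.inr i)

/-- The graph `G_k`: for `k ≥ 1` it is obtained from two disjoint copies of
`G_{k-1}` by adding five new vertices, the `i`-th of which is adjacent exactly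
to the `i`-th distinguished vertex of each of the two copies. -/
def Gk : (k : ℕ) → SimpleGraph (Vt k)
  | 0 => G₀
  | k + 1 => glue (Gk k) (distV k) (distV k)


abbrev T0 := Fin 15 ⊕ Fin 15 ⊕ Fin 5
abbrev T1 := T0 ⊕ T0 ⊕ Fin 5

instance decGlue {V : Type*} [DecidableEq V] (G : SimpleGraph V) [DecidableRel G.Adj]
    (p q : Fin 5 → V) : DecidableRel (glue G p q).Adj := by
  intro u v
  unfold glue
  rw [SimpleGraph.fromRel_adj]
  rcases u with u | u | u <;> rcases v with v | v | v <;> dsimp only <;> infer_instance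

instance decH : DecidableRel Hgraph.Adj := by
  intro u v
  unfold Hgraph
  rw [SimpleGraph.fromRel_adj]
  infer_instance

def K1 : SimpleGraph T1 :=
  glue (glue Hgraph pH qH) (fun i => Sum.inr (Sum.inr i)) (fun i => Sum.inr (Sum.inr i))

instance decK1 : DecidableRel K1.Adj := by
  unfold K1
  infer_instance

def dec0 (i : ℕ) : T0 :=
  if i < 15 then Sum.inl (Fin.ofNat 15 i)
  else if i < 30 then Sum.inr (Sum.inl (Fin.ofNat 15 (i - 15)))
  else Sum.inr (Sum.inr (Fin.ofNat 5 (i - 30)))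

def dec1 (i : ℕ) : T1 :=
  if i < 35 then Sum.inl (dec0 i)
  else if i < 70 then Sum.inr (Sum.inl (dec0 (i - 35)))
  else Sum.inr (Sum.inr (Fin.ofNat 5 (i - 70)))

def nbs : List (List ℕ) :=
  [[1, 4], [0, 2, 3], [1, 6, 7, 32], [1, 5, 14], [0, 5, 13, 30],
   [3, 4, 6], [2, 5], [2, 8, 11, 33], [7, 9, 10], [8, 13],
   [8, 12, 14], [7, 12], [10, 11, 13], [4, 9, 12, 31], [3, 10, 34],
   [16, 19, 30], [15, 17, 18], [16, 21, 22], [16, 20, 29], [15, 20, 28],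
   [18, 19, 21], [17, 20, 33], [17, 23, 26], [22, 24, 25], [23, 28, 31],
   [23, 27, 29], [22, 27, 32], [25, 26, 28], [19, 24, 27], [18, 25, 34],
   [4, 15, 70], [13, 24, 71], [2, 26, 72], [7, 21, 73], [14, 29, 74],
   [36, 39], [35, 37, 38], [36, 41, 42, 67], [36, 40, 49], [35, 40, 48, 65],
   [38, 39, 41], [37, 40], [37, 43, 46, 68], [42, 44, 45], [43, 48],
   [43, 47, 49], [42, 47], [45, 46, 48], [39, 44, 47, 66], [38, 45, 69],
   [51, 54, 65], [50, 52, 53], [51, 56, 57], [51, 55, 64], [50, 55, 63],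
   [53, 54, 56], [52, 55, 68], [52, 58, 61], [57, 59, 60], [58, 63, 66],
   [58, 62, 64], [57, 62, 67], [60, 61, 63], [54, 59, 62], [53, 60, 69],
   [39, 50, 70], [48, 59, 71], [37, 61, 72], [42, 56, 73], [49, 64, 74],
   [30, 65], [31, 66], [32, 67], [33, 68], [34, 69]]

theorem nbs_adj : ∀ v < 75, ∀ u ∈ nbs.getD v [], K1.Adj (dec1 v) (dec1 u) := by
  decide +kernel

theorem dec1_surj : ∀ v : T1, ∃ i < 75, dec1 i = v := by
  decide +kernel

def stepRow (l : List ℕ) (v : ℕ) : ℕ :=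
  (nbs.getD v []).foldr (fun u acc => l.getD u 0 ||| acc) (l.getD v 0)

def stepL (l : List ℕ) : List ℕ := (List.range 75).map (stepRow l)

def L0 : List ℕ := (List.range 75).map (fun v => 2 ^ v)

def Good (n : ℕ) (l : List ℕ) : Prop :=
  ∀ v w, (l.getD v 0).testBit w = true → ∃ p : K1.Walk (dec1 v) (dec1 w), p.length ≤ n

theorem getD_map_range (f : ℕ → ℕ) (v : ℕ) :
    ((List.range 75).map f).getD v 0 = if v < 75 then f v else 0 := by
  by_cases h : v < 75 <;> simp [List.getD, h]

theorem good0 : Good 0 L0 := by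
  intro v w h
  rw [L0, getD_map_range] at h
  split_ifs at h with hv
  · rw [Nat.testBit_two_pow] at h
    have : v = w := by simpa using h
    subst this
    exact ⟨SimpleGraph.Walk.nil, le_rfl⟩
  · simp at h

theorem foldr_bit (l : List ℕ) (w a : ℕ) (us : List ℕ)
    (h : (us.foldr (fun u acc => l.getD u 0 ||| acc) a).testBit w = true) :
    a.testBit w = true ∨ ∃ u ∈ us, (l.getD u 0).testBit w = true := by
  induction us with
  | nil => exact Or.inl h
  | cons x xs ih =>
    rw [List.foldr_cons, Nat.testBit_or, Bool.or_eq_true] at h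
    rcases h with h | h
    · exact Or.inr ⟨x, by simp, h⟩
    · rcases ih h with h | ⟨u, hu, h⟩
      · exact Or.inl h
      · exact Or.inr ⟨u, by simp [hu], h⟩

theorem good_step {n : ℕ} {l : List ℕ} (hl : Good n l) : Good (n + 1) (stepL l) := by
  intro v w h
  rw [stepL, getD_map_range] at h
  split_ifs at h with hv
  · rcases foldr_bit _ _ _ _ h with h | ⟨u, hu, h⟩
    · obtain ⟨p, hp⟩ := hl v w h
      exact ⟨p, by omega⟩
    · obtain ⟨p, hp⟩ := hl u w h
      exact ⟨SimpleGraph.Walk.cons (nbs_adj v hv u hu) p, by simpa using hp⟩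
  · simp at h

theorem final_all : ∀ x ∈ stepL (stepL (stepL (stepL (stepL (stepL (stepL (stepL L0))))))),
    x = 2 ^ 75 - 1 := by
  decide +kernel

theorem K1_walk (a b : T1) : ∃ p : K1.Walk a b, p.length ≤ 8 := by
  obtain ⟨i, hi, rfl⟩ := dec1_surj a
  obtain ⟨j, hj, rfl⟩ := dec1_surj b
  have g := good_step (good_step (good_step (good_step
    (good_step (good_step (good_step (good_step good0)))))))
  refine g i j ?_
  have hlen : i < (stepL (stepL (stepL (stepL (stepL (stepL (stepL (stepL L0)))))))).length := by
    rw [stepL]; simpa using hi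
  rw [List.getD_eq_getElem _ _ hlen, final_all _ (List.getElem_mem hlen),
    Nat.testBit_two_pow_sub_one]
  simpa using hj

theorem Gk1_walk (a b : Vt 1) : ∃ p : (Gk 1).Walk a b, p.length ≤ 8 := K1_walk a b

/-- `G₁` is connected and any two of its vertices are at distance at most `8`. -/
theorem stmt11 :
    (Gk 1).Connected ∧ ∀ u v, (Gk 1).dist u v ≤ 8 := by
  refine ⟨?_, fun u v => ?_⟩
  · haveI : Nonempty (Vt 1) := ⟨distV 1 0⟩
    exact ⟨fun u v => (Gk1_walk u v).elim fun p _ => ⟨p⟩⟩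
  · obtain ⟨p, hp⟩ := Gk1_walk u v
    exact (SimpleGraph.dist_le p).trans hp
end

section
/- For every positive integer k, the graph G_k is connected and has diameter at most 2k+6: any two vertices of G_k are at distance at most 2k+6. -/
def tabL : Fin 5 → Fin 15 → ℕ :=
  ![![2,3,4,3,1,2,3,5,4,3,4,4,3,2,4],
    ![3,4,5,4,2,3,4,4,3,2,3,3,2,1,4],
    ![3,2,1,3,4,3,2,2,3,4,4,3,4,5,4],
    ![4,3,2,4,5,4,3,1,2,3,3,2,3,4,4],
    ![4,3,4,2,4,3,4,4,3,4,2,4,3,4,1]]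

def tabR : Fin 5 → Fin 15 → ℕ :=
  ![![1,2,3,3,2,3,4,4,5,4,5,5,4,3,4],
    ![4,5,4,5,3,4,5,3,2,1,3,4,3,2,4],
    ![5,4,3,5,4,5,4,2,3,4,3,1,2,3,4],
    ![4,3,2,3,3,2,1,3,4,5,5,4,5,4,4],
    ![4,3,4,2,4,3,4,4,3,4,2,4,3,4,1]]

def tabN : Fin 5 → Fin 5 → ℕ :=
  ![![0,3,5,5,5],
    ![3,0,5,5,5],
    ![5,5,0,3,5],
    ![5,5,3,0,5],
    ![5,5,5,5,0]]

def tabD (i : Fin 5) : Fin 15 ⊕ Fin 15 ⊕ Fin 5 → ℕ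
  | Sum.inl a => tabL i a
  | Sum.inr (Sum.inl a) => tabR i a
  | Sum.inr (Sum.inr j) => tabN i j

def hAdj (a b : Fin 15) : Bool :=
  decide ((a, b) ∈ Hedges) || decide ((b, a) ∈ Hedges)

def gAdj : Fin 15 ⊕ Fin 15 ⊕ Fin 5 → Fin 15 ⊕ Fin 15 ⊕ Fin 5 → Bool
  | Sum.inl a, Sum.inl b => hAdj a b
  | Sum.inr (Sum.inl a), Sum.inr (Sum.inl b) => hAdj a b
  | Sum.inr (Sum.inr i), Sum.inl a => decide (a = pH i)
  | Sum.inl a, Sum.inr (Sum.inr i) => decide (a = pH i)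
  | Sum.inr (Sum.inr i), Sum.inr (Sum.inl b) => decide (b = qH i)
  | Sum.inr (Sum.inl b), Sum.inr (Sum.inr i) => decide (b = qH i)
  | _, _ => false

/-- There is a walk of length at most `n`. -/
def Rch {V : Type*} (G : SimpleGraph V) (n : ℕ) (u v : V) : Prop :=
  ∃ p : G.Walk u v, p.length ≤ n

section
variable {V : Type*} {G : SimpleGraph V}

lemma Rch.symm {n : ℕ} {u v : V} (h : Rch G n u v) : Rch G n v u := by
  obtain ⟨p, hp⟩ := h
  exact ⟨p.reverse, by simpa using hp⟩

lemma Rch.trans {m n : ℕ} {u v w : V} (h : Rch G m u v) (h' : Rch G n v w) :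
    Rch G (m + n) u w := by
  obtain ⟨p, hp⟩ := h
  obtain ⟨q, hq⟩ := h'
  exact ⟨p.append q, by rw [SimpleGraph.Walk.length_append]; omega⟩

lemma Rch.mono {m n : ℕ} {u v : V} (h : Rch G m u v) (hmn : m ≤ n) : Rch G n u v := by
  obtain ⟨p, hp⟩ := h
  exact ⟨p, hp.trans hmn⟩

lemma Rch.refl (u : V) : Rch G 0 u u := ⟨SimpleGraph.Walk.nil, by simp⟩

lemma Rch.adj {u v : V} (h : G.Adj u v) : Rch G 1 u v :=
  ⟨h.toWalk, by simp⟩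

lemma Rch.map {W : Type*} {G' : SimpleGraph W} (f : G →g G') {n : ℕ} {u v : V}
    (h : Rch G n u v) : Rch G' n (f u) (f v) := by
  obtain ⟨p, hp⟩ := h
  exact ⟨p.map f, by simpa using hp⟩

variable (G) (p q : Fin 5 → V)

def glueL : G →g glue G p q where
  toFun := Sum.inl
  map_rel' := by
    intro a b h
    simp [glue, h, h.ne]

def glueR : G →g glue G p q where
  toFun := fun a => Sum.inr (Sum.inl a)
  map_rel' := by
    intro a b h
    simp [glue, h, h.ne]

lemma glue_adjL (i : Fin 5) : (glue G p q).Adj (Sum.inl (p i)) (Sum.inr (Sum.inr i)) := by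
  simp [glue]

lemma glue_adjR (i : Fin 5) :
    (glue G p q).Adj (Sum.inr (Sum.inl (q i))) (Sum.inr (Sum.inr i)) := by
  simp [glue]

end

lemma hAdj_adj {a b : Fin 15} (h : hAdj a b = true) : Hgraph.Adj a b := by
  have hne : ∀ a b : Fin 15, hAdj a b = true → a ≠ b := by decide +kernel
  have := hne a b h
  simp only [hAdj, Bool.or_eq_true, decide_eq_true_eq] at h
  simp only [Hgraph, SimpleGraph.fromRel_adj]
  exact ⟨this, h⟩

lemma gAdj_adj : ∀ u v, gAdj u v = true → G₀.Adj u v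
  | Sum.inl _, Sum.inl _, h => (glueL Hgraph pH qH).map_adj (hAdj_adj h)
  | Sum.inr (Sum.inl _), Sum.inr (Sum.inl _), h => (glueR Hgraph pH qH).map_adj (hAdj_adj h)
  | Sum.inr (Sum.inr i), Sum.inl a, h => by
    obtain rfl : a = pH i := by simpa [gAdj] using h
    exact (glue_adjL Hgraph pH qH i).symm
  | Sum.inl a, Sum.inr (Sum.inr i), h => by
    obtain rfl : a = pH i := by simpa [gAdj] using h
    exact glue_adjL Hgraph pH qH i
  | Sum.inr (Sum.inr i), Sum.inr (Sum.inl a), h => by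
    obtain rfl : a = qH i := by simpa [gAdj] using h
    exact (glue_adjR Hgraph pH qH i).symm
  | Sum.inr (Sum.inl a), Sum.inr (Sum.inr i), h => by
    obtain rfl : a = qH i := by simpa [gAdj] using h
    exact glue_adjR Hgraph pH qH i
  | Sum.inr (Sum.inr _), Sum.inr (Sum.inr _), h => by simp [gAdj] at h
  | Sum.inl _, Sum.inr (Sum.inl _), h => by simp [gAdj] at h
  | Sum.inr (Sum.inl _), Sum.inl _, h => by simp [gAdj] at h

lemma tab_zero : ∀ i v, tabD i v = 0 → v = Sum.inr (Sum.inr i) := by decide +kernel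

lemma tab_succ : ∀ i v, tabD i v ≠ 0 → ∃ w, gAdj v w = true ∧ tabD i w + 1 = tabD i v := by
  decide +kernel

lemma tab_via : ∀ u v, ∃ i, tabD i u + tabD i v ≤ 6 := by decide +kernel

lemma tab_rch (i : Fin 5) (n : ℕ) :
    ∀ v, tabD i v = n → Rch G₀ n v (Sum.inr (Sum.inr i)) := by
  induction n with
  | zero =>
    intro v hv
    rw [tab_zero i v hv]
    exact Rch.refl _
  | succ n ih =>
    intro v hv
    obtain ⟨w, hw, hd⟩ := tab_succ i v (by omega)
    exact ((Rch.adj (gAdj_adj v w hw)).trans (ih w (by omega))).mono (by omega)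

lemma via (k : ℕ) : ∀ u v, ∃ i m n, m + n ≤ 2 * k + 6 ∧
    Rch (Gk k) m u (distV k i) ∧ Rch (Gk k) n v (distV k i) := by
  induction k with
  | zero =>
    intro u v
    obtain ⟨i, hi⟩ := tab_via u v
    exact ⟨i, _, _, hi, tab_rch i _ u rfl, tab_rch i _ v rfl⟩
  | succ k ih =>
    -- every old vertex has a shadow in the old graph
    have up : ∀ u : Vt (k + 1), (∃ u' : Vt k, ∀ i m, Rch (Gk k) m u' (distV k i) →
        Rch (Gk (k + 1)) (m + 1) u (distV (k + 1) i)) ∨ ∃ j, u = distV (k + 1) j := by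
      rintro (u | u | j)
      · exact Or.inl ⟨u, fun i m h => (h.map (glueL (Gk k) (distV k) (distV k))).trans
          (Rch.adj (glue_adjL (Gk k) (distV k) (distV k) i))⟩
      · exact Or.inl ⟨u, fun i m h => (h.map (glueR (Gk k) (distV k) (distV k))).trans
          (Rch.adj (glue_adjR (Gk k) (distV k) (distV k) i))⟩
      · exact Or.inr ⟨j, rfl⟩
    have full : ∀ u v, Rch (Gk k) (2 * k + 6) u v := by
      intro u v
      obtain ⟨i, m, n, hmn, h1, h2⟩ := ih u v
      exact (h1.trans h2.symm).mono hmn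
    intro u v
    rcases up u with ⟨u', hu⟩ | ⟨j, rfl⟩
    · rcases up v with ⟨v', hv⟩ | ⟨j, rfl⟩
      · obtain ⟨i, m, n, hmn, h1, h2⟩ := ih u' v'
        exact ⟨i, m + 1, n + 1, by omega, hu i m h1, hv i n h2⟩
      · exact ⟨j, _, 0, by omega, hu j _ (full _ _), Rch.refl _⟩
    · rcases up v with ⟨v', hv⟩ | ⟨l, rfl⟩
      · exact ⟨j, 0, _, by omega, Rch.refl _, hv j _ (full _ _)⟩
      · refine ⟨l, 2 * k + 6 + 1 + 1, 0, by omega, ?_, Rch.refl _⟩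
        have h1 : Rch (Gk (k + 1)) 1 (distV (k + 1) j) (Sum.inl (distV k j)) :=
          (Rch.adj (glue_adjL (Gk k) (distV k) (distV k) j)).symm
        have h2 : Rch (Gk (k + 1)) (2 * k + 6) (Sum.inl (distV k j)) (Sum.inl (distV k l)) :=
          (full (distV k j) (distV k l)).map (glueL (Gk k) (distV k) (distV k))
        have h3 : Rch (Gk (k + 1)) 1 (Sum.inl (distV k l)) (distV (k + 1) l) :=
          Rch.adj (glue_adjL (Gk k) (distV k) (distV k) l)
        exact ((h1.trans h2).trans h3).mono (by omega)

/-- For every positive integer `k`, the graph `G_k` is connected and any two of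
its vertices are at distance at most `2k + 6`. -/
theorem stmt13 (k : ℕ) (hk : 1 ≤ k) :
    (Gk k).Connected ∧ ∀ u v, (Gk k).dist u v ≤ 2 * k + 6 := by
  have full : ∀ u v, Rch (Gk k) (2 * k + 6) u v := by
    intro u v
    obtain ⟨i, m, n, hmn, h1, h2⟩ := via k u v
    exact (h1.trans h2.symm).mono hmn
  haveI : Nonempty (Vt k) := ⟨distV k 0⟩
  refine ⟨SimpleGraph.Connected.mk fun u v => ?_, fun u v => ?_⟩
  · obtain ⟨p, -⟩ := full u v
    exact ⟨p⟩
  · obtain ⟨p, hp⟩ := full u v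
    exact (SimpleGraph.dist_le p).trans hp
end
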